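/- arXiv:1510.08740 — 3 statements merged into one kernel-verified Lean document; each statement's English description precedes it below -/
import Mathlib

section
/- Let H be a real Hilbert space, Ψ : H → ℝ ∪ {+∞} proper, lower-semicontinuous and convex, and Φ : H → ℝ convex and continuously differentiable with L-Lipschitz continuous gradient. Suppose x* ∈ argmin(Ψ + Φ), and let (x_k) be generated by the accelerated forward-backward algorithm with parameter α > 3 and step size 0 < s < 1/L. Then the series Σ_{k=1}^∞ k (Θ(x_k) − Θ(x*)) converges and its sum is at most (α−1)E(1) / (2s(α−3)). -/
open Filter RealInnerProductSpace

lemma line_deriv {H : Type*} [NormedAddCommGroup H] [InnerProductSpace ℝ H] [CompleteSpace H]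
    (Φ : H → ℝ) (Φ' : H → H) (hΦ_diff : ∀ u, HasGradientAt Φ (Φ' u) u) (y d : H) (t : ℝ) :
    HasDerivAt (fun t : ℝ => Φ (y + t • d)) (⟪Φ' (y + t • d), d⟫) t := by
  have h1 : HasDerivAt (fun t : ℝ => y + t • d) d t := by
    simpa using ((hasDerivAt_id t).smul_const d).const_add y
  have h2 := (hΦ_diff (y + t • d)).hasFDerivAt.comp_hasDerivAt t h1
  have h3 : (InnerProductSpace.toDual ℝ H (Φ' (y + t • d))) d = ⟪Φ' (y + t • d), d⟫ := by simp
  rw [← h3]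
  exact h2

lemma grad_ineq {H : Type*} [NormedAddCommGroup H] [InnerProductSpace ℝ H] [CompleteSpace H]
    (Φ : H → ℝ) (Φ' : H → H) (hΦ_convex : ConvexOn ℝ Set.univ Φ)
    (hΦ_diff : ∀ u, HasGradientAt Φ (Φ' u) u) (y u : H) :
    Φ y + ⟪Φ' y, u - y⟫ ≤ Φ u := by
  have hc : ConvexOn ℝ Set.univ (fun t : ℝ => Φ (y + t • (u - y))) := by
    have := hΦ_convex.comp_affineMap (AffineMap.lineMap y u : ℝ →ᵃ[ℝ] H)
    rw [Set.preimage_univ] at this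
    have e : (Φ ∘ (AffineMap.lineMap y u : ℝ →ᵃ[ℝ] H)) = fun t : ℝ => Φ (y + t • (u - y)) := by
      funext t
      simp [AffineMap.lineMap_apply, add_comm]
    rwa [e] at this
  have h := hc.le_slope_of_hasDerivAt (Set.mem_univ 0) (Set.mem_univ 1) one_pos
    (line_deriv Φ Φ' hΦ_diff y (u - y) 0)
  simp [slope_def_field] at h
  linarith

lemma descent {H : Type*} [NormedAddCommGroup H] [InnerProductSpace ℝ H] [CompleteSpace H]
    (Φ : H → ℝ) (Φ' : H → H) (L : ℝ) (hL : 0 ≤ L)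
    (hΦ_diff : ∀ u, HasGradientAt Φ (Φ' u) u)
    (hΦ_lip : LipschitzWith (Real.toNNReal L) Φ') (y u : H) :
    Φ u ≤ Φ y + ⟪Φ' y, u - y⟫ + L / 2 * ‖u - y‖ ^ 2 := by
  set d := u - y with hd
  have hder : ∀ t : ℝ, HasDerivAt
      (fun t : ℝ => Φ (y + t • d) - t * ⟪Φ' y, d⟫ - t ^ 2 * (L / 2 * ‖d‖ ^ 2))
      (⟪Φ' (y + t • d), d⟫ - ⟪Φ' y, d⟫ - 2 * t * (L / 2 * ‖d‖ ^ 2)) t := by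
    intro t
    have h1 := line_deriv Φ Φ' hΦ_diff y d t
    have h2 := (hasDerivAt_id t).mul_const (⟪Φ' y, d⟫)
    have h3 := (hasDerivAt_pow 2 t).mul_const (L / 2 * ‖d‖ ^ 2)
    exact ((h1.sub h2).sub h3).congr_deriv (by simp)
  have hanti : AntitoneOn
      (fun t : ℝ => Φ (y + t • d) - t * ⟪Φ' y, d⟫ - t ^ 2 * (L / 2 * ‖d‖ ^ 2)) (Set.Icc 0 1) := by
    apply antitoneOn_of_deriv_nonpos (convex_Icc 0 1)
    · exact fun t _ => (hder t).continuousAt.continuousWithinAt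
    · exact fun t _ => (hder t).differentiableAt.differentiableWithinAt
    · intro t ht
      rw [interior_Icc] at ht
      rw [(hder t).deriv, ← inner_sub_left]
      have h1 := real_inner_le_norm (Φ' (y + t • d) - Φ' y) d
      have h2 := hΦ_lip.norm_sub_le (y + t • d) y
      rw [add_sub_cancel_left, norm_smul, Real.norm_of_nonneg ht.1.le, Real.coe_toNNReal L hL] at h2
      have h3 := mul_le_mul_of_nonneg_right h2 (norm_nonneg d)
      nlinarith
  have h := hanti (Set.left_mem_Icc.2 zero_le_one) (Set.right_mem_Icc.2 zero_le_one) zero_le_one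
  simp [hd] at h
  simp only [hd]
  linarith

lemma prox_ineq {H : Type*} [NormedAddCommGroup H] [InnerProductSpace ℝ H]
    (Ψ : H → EReal) (c : ℝ) (hc : 0 ≤ c)
    (hΨ_convex : ∀ u v : H, ∀ a b : ℝ, 0 ≤ a → 0 ≤ b → a + b = 1 →
      Ψ (a • u + b • v) ≤ (a : EReal) * Ψ u + (b : EReal) * Ψ v)
    (p v : H)
    (hp : ∀ u : H, Ψ p + ((c * ‖p - v‖ ^ 2 : ℝ) : EReal) ≤ Ψ u + ((c * ‖u - v‖ ^ 2 : ℝ) : EReal))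
    (u : H) (a b : ℝ) (ha : Ψ p = a) (hb : Ψ u = b) :
    a + c * ‖p - v‖ ^ 2 + c * ‖u - p‖ ^ 2 ≤ b + c * ‖u - v‖ ^ 2 := by
  have key : ∀ t : ℝ, 0 < t → t ≤ 1 →
      a + c * ‖p - v‖ ^ 2 + c * ‖u - p‖ ^ 2 - (b + c * ‖u - v‖ ^ 2) ≤ t * (c * ‖u - p‖ ^ 2) := by
    intro t ht ht1
    have h1 := hp ((1 - t) • p + t • u)
    have h2 := hΨ_convex p u (1 - t) t (by linarith) ht.le (by ring)
    have h3 := h1.trans (add_le_add_left h2 _)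
    rw [ha, hb] at h3
    norm_cast at h3
    have e : ‖(1 - t) • p + t • u - v‖ ^ 2
        = (1 - t) * ‖p - v‖ ^ 2 + t * ‖u - v‖ ^ 2 - t * (1 - t) * ‖u - p‖ ^ 2 := by
      have e1 : (1 - t) • p + t • u - v = (1 - t) • (p - v) + t • (u - v) := by module
      have e2 : u - p = (u - v) - (p - v) := by abel
      rw [e1, e2, norm_add_sq_real, norm_sub_sq_real (u - v) (p - v), norm_smul, norm_smul, inner_smul_left,
        inner_smul_right, mul_pow, mul_pow, real_inner_comm (p - v) (u - v), Real.norm_eq_abs, Real.norm_eq_abs, sq_abs, sq_abs]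
      simp only [conj_trivial]
      ring
    rw [e] at h3
    have h4 : t * (a + c * ‖p - v‖ ^ 2 + c * ‖u - p‖ ^ 2 - (b + c * ‖u - v‖ ^ 2))
        ≤ t * (t * (c * ‖u - p‖ ^ 2)) := by linarith
    exact le_of_mul_le_mul_left h4 ht
  have hB : 0 ≤ c * ‖u - p‖ ^ 2 := by positivity
  set B := c * ‖u - p‖ ^ 2
  by_contra hcon
  push Not at hcon
  set A := a + c * ‖p - v‖ ^ 2 + B - (b + c * ‖u - v‖ ^ 2) with hA
  have hApos : 0 < A := by linarith
  have h := key (A / (A + B + 1) * (1/2)) (by positivity) (by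
    have : A / (A + B + 1) ≤ 1 := by rw [div_le_one (by positivity)]; linarith
    linarith)
  have : A / (A + B + 1) * (1/2) * B < A := by
    rw [div_mul_eq_mul_div, div_mul_eq_mul_div, div_lt_iff₀ (by positivity)]
    nlinarith [mul_nonneg hApos.le hB, mul_pos hApos hApos]
  linarith

lemma step_ineq {H : Type*} [NormedAddCommGroup H] [InnerProductSpace ℝ H] [CompleteSpace H]
    (Ψ : H → EReal) (Φ : H → ℝ) (Φ' : H → H) (L s : ℝ)
    (hΨ_convex : ∀ u v : H, ∀ a b : ℝ, 0 ≤ a → 0 ≤ b → a + b = 1 →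
      Ψ (a • u + b • v) ≤ (a : EReal) * Ψ u + (b : EReal) * Ψ v)
    (hΦ_convex : ConvexOn ℝ Set.univ Φ)
    (hΦ_diff : ∀ u, HasGradientAt Φ (Φ' u) u)
    (hΦ_lip : LipschitzWith (Real.toNNReal L) Φ')
    (hs : 0 < s) (hL : 0 ≤ L) (hsL : L ≤ 1 / s) (p y : H)
    (hp : ∀ u : H, Ψ p + ((1 / (2 * s) * ‖p - (y - s • Φ' y)‖ ^ 2 : ℝ) : EReal)
        ≤ Ψ u + ((1 / (2 * s) * ‖u - (y - s • Φ' y)‖ ^ 2 : ℝ) : EReal))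
    (u : H) (a b : ℝ) (ha : Ψ p = a) (hb : Ψ u = b) :
    a + Φ p ≤ b + Φ u + 1 / (2 * s) * (‖u - y‖ ^ 2 - ‖u - p‖ ^ 2) := by
  have h1 := prox_ineq Ψ (1 / (2 * s)) (by positivity) hΨ_convex p _ hp u a b ha hb
  have h2 := descent Φ Φ' L hL hΦ_diff hΦ_lip y p
  have h3 := grad_ineq Φ Φ' hΦ_convex hΦ_diff y u
  have e : ∀ w : H, 1 / (2 * s) * ‖w - (y - s • Φ' y)‖ ^ 2
      = 1 / (2 * s) * ‖w - y‖ ^ 2 + ⟪Φ' y, w - y⟫ + s / 2 * ‖Φ' y‖ ^ 2 := by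
    intro w
    have e1 : w - (y - s • Φ' y) = (w - y) + s • Φ' y := by abel
    rw [e1, norm_add_sq_real, norm_smul, inner_smul_right, mul_pow, real_inner_comm,
      Real.norm_of_nonneg hs.le]
    field_simp
  rw [e, e] at h1
  have h4 : L / 2 * ‖p - y‖ ^ 2 ≤ 1 / (2 * s) * ‖p - y‖ ^ 2 := by
    apply mul_le_mul_of_nonneg_right _ (by positivity)
    calc L / 2 ≤ (1 / s) / 2 := by linarith
      _ = _ := by field_simp
  linarith

lemma lyap {H : Type*} [NormedAddCommGroup H] [InnerProductSpace ℝ H] [CompleteSpace H]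
    (Ψ : H → EReal) (Φ : H → ℝ) (Φ' : H → H) (L s α : ℝ)
    (hΨ_ne_bot : ∀ u, Ψ u ≠ ⊥)
    (hΨ_convex : ∀ u v : H, ∀ a b : ℝ, 0 ≤ a → 0 ≤ b → a + b = 1 →
      Ψ (a • u + b • v) ≤ (a : EReal) * Ψ u + (b : EReal) * Ψ v)
    (hΦ_convex : ConvexOn ℝ Set.univ Φ)
    (hΦ_diff : ∀ u, HasGradientAt Φ (Φ' u) u)
    (hΦ_lip : LipschitzWith (Real.toNNReal L) Φ')
    (hα : 3 < α) (hs : 0 < s) (hL : 0 ≤ L) (hsL : L ≤ 1 / s) (κ : ℝ) (hκ : 0 ≤ κ)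
    (xm x p y xstar : H)
    (hy : y = x + ((κ - 1) / (κ + α - 1)) • (x - xm))
    (hp : ∀ u : H, Ψ p + ((1 / (2 * s) * ‖p - (y - s • Φ' y)‖ ^ 2 : ℝ) : EReal)
        ≤ Ψ u + ((1 / (2 * s) * ‖u - (y - s • Φ' y)‖ ^ 2 : ℝ) : EReal))
    (a b c : ℝ) (ha : Ψ p = a) (hb : Ψ x = b) (hc : Ψ xstar = c)
    (hmin : c + Φ xstar ≤ b + Φ x) :
    2 * s / (α - 1) * (κ + 1 + α - 2) ^ 2 * ((a + Φ p) - (c + Φ xstar))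
      + (α - 1) * ‖p + ((κ + 1 - 1) / (α - 1)) • (p - x) - xstar‖ ^ 2
      + 2 * s * (α - 3) / (α - 1) * (κ * ((b + Φ x) - (c + Φ xstar)))
    ≤ 2 * s / (α - 1) * (κ + α - 2) ^ 2 * ((b + Φ x) - (c + Φ xstar))
      + (α - 1) * ‖x + ((κ - 1) / (α - 1)) • (x - xm) - xstar‖ ^ 2 := by
  have hα1 : 0 < α - 1 := by linarith
  have hD : 0 < κ + α - 1 := by linarith
  set τ := (α - 1) / (κ + α - 1) with hτ
  have hτ0 : 0 ≤ τ := by positivity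
  have hτ1 : 0 ≤ 1 - τ := by
    rw [sub_nonneg, hτ, div_le_one hD]; linarith
  set u := (1 - τ) • x + τ • xstar with hu
  have hΨu := hΨ_convex x xstar (1 - τ) τ hτ1 hτ0 (by ring)
  rw [← hu, hb, hc] at hΨu
  have hΦu : Φ u ≤ (1 - τ) * Φ x + τ * Φ xstar := by
    simpa using hΦ_convex.2 (Set.mem_univ x) (Set.mem_univ xstar) hτ1 hτ0 (by ring)
  rw [← EReal.coe_mul, ← EReal.coe_mul, ← EReal.coe_add] at hΨu
  have hut : Ψ u ≠ ⊤ := ne_top_of_le_ne_top (EReal.coe_ne_top _) hΨu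
  have hur : Ψ u = ((Ψ u).toReal : EReal) := (EReal.coe_toReal hut (hΨ_ne_bot u)).symm
  rw [hur, EReal.coe_le_coe_iff] at hΨu
  have h := step_ineq Ψ Φ Φ' L s hΨ_convex hΦ_convex hΦ_diff hΦ_lip hs hL hsL p y hp u a _ ha hur
  have e1 : u - y = -(τ • (x + ((κ - 1) / (α - 1)) • (x - xm) - xstar)) := by
    have : (κ - 1) / (κ + α - 1) = τ * ((κ - 1) / (α - 1)) := by rw [hτ]; field_simp
    rw [hu, hy, this]; module
  have e2 : u - p = -(τ • (p + ((κ + 1 - 1) / (α - 1)) • (p - x) - xstar)) := by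
    have : 1 - τ = τ * ((κ + 1 - 1) / (α - 1)) := by rw [hτ]; field_simp; ring
    have h' : u - p = (1 - τ) • (x - p) + τ • (xstar - p) := by rw [hu]; module
    rw [h', this]; module
  rw [e1, e2, norm_neg, norm_neg, norm_smul, norm_smul, Real.norm_of_nonneg hτ0] at h
  set Z := ‖x + ((κ - 1) / (α - 1)) • (x - xm) - xstar‖
  set W := ‖p + ((κ + 1 - 1) / (α - 1)) • (p - x) - xstar‖
  set θ := (b + Φ x) - (c + Φ xstar) with hθ
  set θ' := (a + Φ p) - (c + Φ xstar) with hθ'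
  have h5 : θ' ≤ (1 - τ) * θ + 1 / (2 * s) * ((τ * Z) ^ 2 - (τ * W) ^ 2) := by
    rw [hθ, hθ']; linarith
  have h6 := mul_le_mul_of_nonneg_left h5
    (show 0 ≤ 2 * s / (α - 1) * (κ + α - 1) ^ 2 by positivity)
  have h7 : 2 * s / (α - 1) * (κ + α - 1) ^ 2
      * ((1 - τ) * θ + 1 / (2 * s) * ((τ * Z) ^ 2 - (τ * W) ^ 2))
      = 2 * s / (α - 1) * (κ * (κ + α - 1)) * θ + (α - 1) * Z ^ 2 - (α - 1) * W ^ 2 := by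
    rw [hτ]; field_simp; ring
  rw [h7] at h6
  have h8 : 0 ≤ 2 * s / (α - 1) * (α - 2) ^ 2 * θ := by
    have : 0 ≤ θ := by linarith
    positivity
  have h9 : 2 * s * (α - 3) / (α - 1) = 2 * s / (α - 1) * (α - 3) := by ring
  rw [h9]
  nlinarith


/-- Fact 3: `∑ k (Θ(x_k) - Θ(x*)) ≤ (α-1)E(1)/(2s(α-3))`. -/
theorem fista_summability_values
    {H : Type*} [NormedAddCommGroup H] [InnerProductSpace ℝ H] [CompleteSpace H]
    (Ψ : H → EReal) (Φ : H → ℝ) (Φ' : H → H) (L s α : ℝ)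
    (hΨ_ne_bot : ∀ u, Ψ u ≠ ⊥) (hΨ_proper : ∃ u, Ψ u ≠ ⊤)
    (hΨ_lsc : LowerSemicontinuous Ψ)
    (hΨ_convex : ∀ u v : H, ∀ a b : ℝ, 0 ≤ a → 0 ≤ b → a + b = 1 →
      Ψ (a • u + b • v) ≤ (a : EReal) * Ψ u + (b : EReal) * Ψ v)
    (hΦ_convex : ConvexOn ℝ Set.univ Φ)
    (hΦ_diff : ∀ u, HasGradientAt Φ (Φ' u) u)
    (hΦ_lip : LipschitzWith (Real.toNNReal L) Φ')
    (hα : 3 < α) (hs : 0 < s) (hsL : s < 1 / L)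
    (x y : ℕ → H)
    (hy : ∀ k : ℕ, 1 ≤ k →
      y k = x k + (((k : ℝ) - 1) / ((k : ℝ) + α - 1)) • (x k - x (k - 1)))
    (hx : ∀ k : ℕ, 1 ≤ k → ∀ u : H,
      Ψ (x (k + 1)) + ((1 / (2 * s) * ‖x (k + 1) - (y k - s • Φ' (y k))‖ ^ 2 : ℝ) : EReal)
        ≤ Ψ u + ((1 / (2 * s) * ‖u - (y k - s • Φ' (y k))‖ ^ 2 : ℝ) : EReal))
    (xstar : H)
    (hxstar : ∀ u, Ψ xstar + (Φ xstar : EReal) ≤ Ψ u + (Φ u : EReal)) :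
    ∃ S : EReal, HasSum (fun k : ℕ => ((k : ℝ) : EReal) * ((Ψ (x k) + (Φ (x k) : EReal)) - (Ψ xstar + (Φ xstar : EReal)))) S ∧
      S ≤ (((α - 1) / (2 * s * (α - 3)) : ℝ) : EReal) * (((2 * s / (α - 1) * ((1 : ℝ) + α - 2) ^ 2 : ℝ) : EReal) * ((Ψ (x 1) + (Φ (x 1) : EReal)) - (Ψ xstar + (Φ xstar : EReal))) + (((α - 1) * ‖(x 1 + (((1 : ℝ) - 1) / (α - 1)) • (x 1 - x (1 - 1))) - xstar‖ ^ 2 : ℝ) : EReal)) := by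
  have hL : 0 < L := by
    by_contra h
    push Not at h
    have := div_nonpos_of_nonneg_of_nonpos zero_le_one h
    linarith
  have hsL' : L ≤ 1 / s := by
    rw [le_div_iff₀ hs]
    rw [lt_div_iff₀ hL] at hsL
    linarith
  obtain ⟨u0, hu0⟩ := hΨ_proper
  have hst : Ψ xstar ≠ ⊤ := by
    intro h
    have h1 := hxstar u0
    rw [h, EReal.top_add_coe, top_le_iff] at h1
    exact EReal.add_ne_top hu0 (EReal.coe_ne_top _) h1
  have hxt : ∀ k, 1 ≤ k → Ψ (x (k + 1)) ≠ ⊤ := by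
    intro k hk h
    have h1 := hx k hk u0
    rw [h, EReal.top_add_coe, top_le_iff] at h1
    exact EReal.add_ne_top hu0 (EReal.coe_ne_top _) h1
  obtain ⟨c, hc⟩ : ∃ c : ℝ, Ψ xstar = c :=
    ⟨_, (EReal.coe_toReal hst (hΨ_ne_bot _)).symm⟩
  set f : ℕ → EReal := fun k : ℕ => ((k : ℝ) : EReal) *
    ((Ψ (x k) + (Φ (x k) : EReal)) - (Ψ xstar + (Φ xstar : EReal))) with hf
  have hf0 : ∀ k, 0 ≤ f k := by
    intro k
    apply mul_nonneg
    · exact_mod_cast Nat.cast_nonneg k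
    · rw [EReal.sub_nonneg]
      · exact hxstar _
      · right; rw [hc]; norm_cast; exact EReal.coe_ne_top _
      · right; rw [hc]; norm_cast; exact EReal.coe_ne_bot _
  have hmono : Monotone (fun t : Finset ℕ => ∑ k ∈ t, f k) := fun t t' h =>
    Finset.sum_le_sum_of_subset_of_nonneg h fun k _ _ => hf0 k
  refine ⟨⨆ t : Finset ℕ, ∑ k ∈ t, f k, ?_, ?_⟩
  · have := tendsto_atTop_iSup hmono
    simpa [HasSum] using this
  have hC : 0 < (α - 1) / (2 * s * (α - 3)) := by
    apply div_pos (by linarith); apply mul_pos (by linarith); linarith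
  have hC2 : 0 < 2 * s / (α - 1) * ((1 : ℝ) + α - 2) ^ 2 := by
    have : 0 < α - 1 := by linarith
    have : 0 < 1 + α - 2 := by linarith
    positivity
  by_cases h1 : Ψ (x 1) = ⊤
  · rw [h1, hc, EReal.top_add_coe, ← EReal.coe_add, EReal.top_sub_coe,
      EReal.coe_mul_top_of_pos hC2, EReal.top_add_coe, EReal.coe_mul_top_of_pos hC]
    exact le_top
  have hfin : ∀ k, 1 ≤ k → Ψ (x k) = ((Ψ (x k)).toReal : EReal) := by
    intro k hk
    refine (EReal.coe_toReal ?_ (hΨ_ne_bot _)).symm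
    obtain rfl | hk' := eq_or_lt_of_le hk
    · exact h1
    · obtain ⟨j, rfl⟩ : ∃ j, k = j + 1 := ⟨k - 1, by omega⟩
      exact hxt j (by omega)
  set θ : ℕ → ℝ := fun k => ((Ψ (x k)).toReal + Φ (x k)) - (c + Φ xstar) with hθ
  have hθe : ∀ k, 1 ≤ k →
      (Ψ (x k) + (Φ (x k) : EReal)) - (Ψ xstar + (Φ xstar : EReal)) = (θ k : EReal) := by
    intro k hk
    rw [hfin k hk, hc]
    norm_cast
  have hmin : ∀ k, 1 ≤ k → c + Φ xstar ≤ (Ψ (x k)).toReal + Φ (x k) := by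
    intro k hk
    have := hxstar (x k)
    rw [hfin k hk, hc] at this
    exact_mod_cast this
  have hfe : ∀ k, f k = (((k : ℝ) * θ k : ℝ) : EReal) := by
    intro k
    rcases Nat.eq_zero_or_pos k with rfl | hk
    · simp [hf]
    · simp only [hf]
      rw [hθe k hk, EReal.coe_mul]
  set E : ℕ → ℝ := fun k => 2 * s / (α - 1) * ((k : ℝ) + α - 2) ^ 2 * θ k
    + (α - 1) * ‖x k + (((k : ℝ) - 1) / (α - 1)) • (x k - x (k - 1)) - xstar‖ ^ 2 with hE
  have hstep : ∀ k, 1 ≤ k →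
      E (k + 1) + 2 * s * (α - 3) / (α - 1) * ((k : ℝ) * θ k) ≤ E k := by
    intro k hk
    have := lyap Ψ Φ Φ' L s α hΨ_ne_bot hΨ_convex hΦ_convex hΦ_diff hΦ_lip hα hs hL.le hsL' k
      (Nat.cast_nonneg k) (x (k - 1)) (x k) (x (k + 1)) (y k) xstar (hy k hk) (hx k hk)
      _ _ c (hfin (k + 1) (by omega)) (hfin k hk) hc (hmin k hk)
    simp only [hE, hθ, Nat.cast_add, Nat.cast_one, Nat.add_sub_cancel]
    exact this
  have hsum : ∀ n : ℕ, E (n + 1) + 2 * s * (α - 3) / (α - 1)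
      * ∑ k ∈ Finset.range (n + 1), (k : ℝ) * θ k ≤ E 1 := by
    intro n
    induction n with
    | zero => simp
    | succ n ih =>
      rw [Finset.sum_range_succ, mul_add]
      have := hstep (n + 1) (by omega)
      linarith
  have hEpos : ∀ k, 1 ≤ k → 0 ≤ E k := by
    intro k hk
    have : 0 < α - 1 := by linarith
    have : 0 ≤ θ k := by simp only [hθ]; linarith [hmin k hk]
    simp only [hE]
    positivity
  have hR : (((α - 1) / (2 * s * (α - 3)) : ℝ) : EReal) * (((2 * s / (α - 1) * ((1 : ℝ) + α - 2) ^ 2 : ℝ) : EReal) * ((Ψ (x 1) + (Φ (x 1) : EReal)) - (Ψ xstar + (Φ xstar : EReal))) + (((α - 1) * ‖(x 1 + (((1 : ℝ) - 1) / (α - 1)) • (x 1 - x (1 - 1))) - xstar‖ ^ 2 : ℝ) : EReal))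
      = (((α - 1) / (2 * s * (α - 3)) * E 1 : ℝ) : EReal) := by
    rw [hθe 1 le_rfl, ← EReal.coe_mul, ← EReal.coe_add, ← EReal.coe_mul]
    simp only [hE, Nat.cast_one]
  rw [hR]
  apply iSup_le
  intro t
  obtain ⟨n, hn⟩ := t.exists_nat_subset_range
  have hn' : t ⊆ Finset.range (n + 1) := hn.trans (Finset.range_mono (Nat.le_succ n))
  refine (hmono hn').trans ?_
  have hcoe : ∑ k ∈ Finset.range (n + 1), f k
      = ((∑ k ∈ Finset.range (n + 1), (k : ℝ) * θ k : ℝ) : EReal) := by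
    rw [Finset.sum_congr rfl fun k _ => hfe k]
    induction n + 1 with
    | zero => simp
    | succ m ih => rw [Finset.sum_range_succ, Finset.sum_range_succ, ih, EReal.coe_add]
  show ∑ k ∈ Finset.range (n + 1), f k ≤ _
  rw [hcoe, EReal.coe_le_coe_iff]
  have h2 := hsum n
  have h3 := hEpos (n + 1) (by omega)
  have h4 := mul_le_mul_of_nonneg_left
    (show 2 * s * (α - 3) / (α - 1) * ∑ k ∈ Finset.range (n + 1), (k : ℝ) * θ k ≤ E 1 by linarith)
    hC.le
  have h5 : (α - 1) / (2 * s * (α - 3)) * (2 * s * (α - 3) / (α - 1)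
      * ∑ k ∈ Finset.range (n + 1), (k : ℝ) * θ k)
      = ∑ k ∈ Finset.range (n + 1), (k : ℝ) * θ k := by
    have ha : α - 1 ≠ 0 := by linarith
    have hb : α - 3 ≠ 0 := by linarith
    field_simp
  linarith
end

section
/- Let H be a real Hilbert space, Ψ : H → ℝ ∪ {+∞} proper, lower-semicontinuous and convex, and Φ : H → ℝ convex and continuously differentiable with L-Lipschitz continuous gradient. Suppose x* ∈ argmin(Ψ + Φ), and let (x_k) be generated by the accelerated forward-backward algorithm with parameter α ≥ 3 and step size 0 < s < 1/L. With θ_k = Θ(x_k) − Θ(x*) and d_k = (1/(2s))‖x_{k+1} − x_k‖², one has, for every k ≥ 1, θ_{k+1} + d_k ≤ θ_k + ((k−1)²/(k+α−1)²) d_{k−1}. -/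
open Filter RealInnerProductSpace

lemma aux_line {H : Type*} [NormedAddCommGroup H] [InnerProductSpace ℝ H] [CompleteSpace H]
    (Φ : H → ℝ) (Φ' : H → H) (hd : ∀ u, HasGradientAt Φ (Φ' u) u) (y d : H) (t : ℝ) :
    HasDerivAt (fun t : ℝ => Φ (y + t • d)) (inner ℝ (Φ' (y + t • d)) d) t := by
  have h1 : HasDerivAt (fun t : ℝ => y + t • d) d t := by
    simpa using ((hasDerivAt_id t).smul_const d).const_add y
  have h2 := (hd (y + t • d)).hasFDerivAt.comp_hasDerivAt t h1
  simpa [Function.comp_def] using h2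

lemma aux_convex {H : Type*} [NormedAddCommGroup H] [InnerProductSpace ℝ H] [CompleteSpace H]
    (Φ : H → ℝ) (Φ' : H → H) (hd : ∀ u, HasGradientAt Φ (Φ' u) u)
    (hc : ConvexOn ℝ Set.univ Φ) (y u : H) :
    Φ y + inner ℝ (Φ' y) (u - y) ≤ Φ u := by
  have hcv : ConvexOn ℝ Set.univ (fun t : ℝ => Φ (y + t • (u - y))) := by
    have := hc.comp_affineMap (AffineMap.lineMap y u : ℝ →ᵃ[ℝ] H)
    have hf : (fun t : ℝ => Φ (y + t • (u - y))) = Φ ∘ (AffineMap.lineMap y u : ℝ →ᵃ[ℝ] H) := by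
      ext t
      simp [AffineMap.lineMap_apply, add_comm]
    rw [hf]
    simpa using this
  have h := hcv.le_slope_of_hasDerivAt (Set.mem_univ (0:ℝ)) (Set.mem_univ (1:ℝ)) one_pos
    (aux_line Φ Φ' hd y (u - y) 0)
  simp [slope_def_field] at h
  linarith

lemma aux_descent {H : Type*} [NormedAddCommGroup H] [InnerProductSpace ℝ H] [CompleteSpace H]
    (Φ : H → ℝ) (Φ' : H → H) (hd : ∀ u, HasGradientAt Φ (Φ' u) u) (L : ℝ) (hL : 0 ≤ L)
    (hlip : LipschitzWith (Real.toNNReal L) Φ') (y z : H) :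
    Φ z ≤ Φ y + inner ℝ (Φ' y) (z - y) + L / 2 * ‖z - y‖ ^ 2 := by
  set d := z - y with hdd
  have hder : ∀ t : ℝ, HasDerivAt
      (fun t : ℝ => Φ (y + t • d) - t * inner ℝ (Φ' y) d - t ^ 2 * (L / 2 * ‖d‖ ^ 2))
      (inner ℝ (Φ' (y + t • d)) d - inner ℝ (Φ' y) d - 2 * t * (L / 2 * ‖d‖ ^ 2)) t := by
    intro t
    have h1 := ((hasDerivAt_id t).mul_const (inner ℝ (Φ' y) d))
    have h2 := ((hasDerivAt_pow 2 t).mul_const (L / 2 * ‖d‖ ^ 2))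
    have h3 := ((aux_line Φ Φ' hd y d t).sub h1).sub h2
    refine h3.congr_deriv ?_
    simp
  have hanti := antitoneOn_of_deriv_nonpos (convex_Icc (0:ℝ) 1)
    (fun t _ => (hder t).continuousAt.continuousWithinAt)
    (fun t _ => (hder t).differentiableAt.differentiableWithinAt)
    (by
      intro t ht
      rw [interior_Icc] at ht
      rw [(hder t).deriv, ← inner_sub_left]
      have h1 := real_inner_le_norm (Φ' (y + t • d) - Φ' y) d
      have h2 := hlip.dist_le_mul (y + t • d) y
      rw [dist_eq_norm, dist_eq_norm, Real.coe_toNNReal L hL, add_sub_cancel_left, norm_smul,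
        Real.norm_of_nonneg ht.1.le] at h2
      have h3 := mul_le_mul_of_nonneg_right h2 (norm_nonneg d)
      nlinarith)
  have h := hanti (Set.left_mem_Icc.2 zero_le_one) (Set.right_mem_Icc.2 zero_le_one) zero_le_one
  simp [hdd] at h
  simp only [hdd]
  linarith

lemma aux_lim (A B : ℝ) (h : ∀ t : ℝ, 0 < t → t < 1 → A ≤ t * B) : A ≤ 0 := by
  have h1 : Tendsto (fun t : ℝ => t * B) (nhdsWithin 0 (Set.Ioi 0)) (nhds (0 * B)) :=
    ((continuous_id.mul continuous_const).tendsto 0).mono_left nhdsWithin_le_nhds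
  rw [zero_mul] at h1
  refine ge_of_tendsto h1 ?_
  filter_upwards [Ioo_mem_nhdsGT (one_pos : (0:ℝ) < 1)] with t ht using h t ht.1 ht.2

lemma aux_prox {H : Type*} [NormedAddCommGroup H] [InnerProductSpace ℝ H]
    (Ψ : H → EReal)
    (hcv : ∀ u v : H, ∀ a b : ℝ, 0 ≤ a → 0 ≤ b → a + b = 1 →
      Ψ (a • u + b • v) ≤ (a : EReal) * Ψ u + (b : EReal) * Ψ v)
    (c : ℝ) (z w u : H) (p q : ℝ) (hp : Ψ z = p) (hq : Ψ u = q)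
    (hx : ∀ v : H, Ψ z + ((c * ‖z - w‖ ^ 2 : ℝ) : EReal) ≤ Ψ v + ((c * ‖v - w‖ ^ 2 : ℝ) : EReal)) :
    p ≤ q + 2 * c * inner ℝ (u - z) (z - w) := by
  have := aux_lim (p - q - 2 * c * inner ℝ (u - z) (z - w)) (c * ‖u - z‖ ^ 2) (by
    intro t ht0 ht1
    have h1 := hcv u z t (1 - t) ht0.le (by linarith) (by ring)
    have h2 := (hx (t • u + (1 - t) • z)).trans (add_le_add_left h1 _)
    rw [hp, hq] at h2
    have e : t • u + (1 - t) • z - w = (z - w) + t • (u - z) := by module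
    rw [e] at h2
    norm_cast at h2
    rw [norm_add_sq_real, norm_smul, inner_smul_right, Real.norm_of_nonneg ht0.le,
      real_inner_comm] at h2
    refine le_of_mul_le_mul_left ?_ ht0
    linarith)
  linarith

/-- Inequality (12): `θ_{k+1} + d_k ≤ θ_k + ((k-1)²/(k+α-1)²) d_{k-1}`. -/
theorem fista_mechanical_energy_decrease
    {H : Type*} [NormedAddCommGroup H] [InnerProductSpace ℝ H] [CompleteSpace H]
    (Ψ : H → EReal) (Φ : H → ℝ) (Φ' : H → H) (L s α : ℝ)
    (hΨ_ne_bot : ∀ u, Ψ u ≠ ⊥) (hΨ_proper : ∃ u, Ψ u ≠ ⊤)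
    (hΨ_lsc : LowerSemicontinuous Ψ)
    (hΨ_convex : ∀ u v : H, ∀ a b : ℝ, 0 ≤ a → 0 ≤ b → a + b = 1 →
      Ψ (a • u + b • v) ≤ (a : EReal) * Ψ u + (b : EReal) * Ψ v)
    (hΦ_convex : ConvexOn ℝ Set.univ Φ)
    (hΦ_diff : ∀ u, HasGradientAt Φ (Φ' u) u)
    (hΦ_lip : LipschitzWith (Real.toNNReal L) Φ')
    (hα : 3 ≤ α) (hs : 0 < s) (hsL : s < 1 / L)
    (x y : ℕ → H)
    (hy : ∀ k : ℕ, 1 ≤ k →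
      y k = x k + (((k : ℝ) - 1) / ((k : ℝ) + α - 1)) • (x k - x (k - 1)))
    (hx : ∀ k : ℕ, 1 ≤ k → ∀ u : H,
      Ψ (x (k + 1)) + ((1 / (2 * s) * ‖x (k + 1) - (y k - s • Φ' (y k))‖ ^ 2 : ℝ) : EReal)
        ≤ Ψ u + ((1 / (2 * s) * ‖u - (y k - s • Φ' (y k))‖ ^ 2 : ℝ) : EReal))
    (xstar : H)
    (hxstar : ∀ u, Ψ xstar + (Φ xstar : EReal) ≤ Ψ u + (Φ u : EReal)) :
    ∀ k : ℕ, 1 ≤ k →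
      ((Ψ (x (k + 1)) + (Φ (x (k + 1)) : EReal)) - (Ψ xstar + (Φ xstar : EReal))) + (((1 / (2 * s) * ‖x (k + 1) - x k‖ ^ 2) : ℝ) : EReal)
        ≤ ((Ψ (x k) + (Φ (x k) : EReal)) - (Ψ xstar + (Φ xstar : EReal))) + ((((k : ℝ) - 1) ^ 2 / ((k : ℝ) + α - 1) ^ 2 * (1 / (2 * s) * ‖x ((k - 1) + 1) - x (k - 1)‖ ^ 2) : ℝ) : EReal) := by

  intro k hk
  have hL : 0 < L := by
    by_contra hneg
    have : 1 / L ≤ 0 := one_div_nonpos.2 (not_lt.1 hneg)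
    linarith
  have hLs : L ≤ 1 / s := by
    rw [lt_div_iff₀ hL] at hsL
    rw [le_div_iff₀ hs]
    linarith
  obtain ⟨u0, hu0⟩ := hΨ_proper
  have hz_top : Ψ (x (k + 1)) ≠ ⊤ := by
    intro h
    have h1 := hx k hk u0
    rw [h, EReal.top_add_coe, top_le_iff] at h1
    lift Ψ u0 to ℝ using ⟨hu0, hΨ_ne_bot u0⟩ with r0
    exact EReal.coe_ne_top _ h1
  have hs_top : Ψ xstar ≠ ⊤ := by
    intro h
    have h1 := hxstar u0
    rw [h, EReal.top_add_coe, top_le_iff] at h1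
    lift Ψ u0 to ℝ using ⟨hu0, hΨ_ne_bot u0⟩ with r0
    exact EReal.coe_ne_top _ h1
  have hz : ((Ψ (x (k + 1))).toReal : EReal) = Ψ (x (k + 1)) :=
    EReal.coe_toReal hz_top (hΨ_ne_bot _)
  have hst : ((Ψ xstar).toReal : EReal) = Ψ xstar := EReal.coe_toReal hs_top (hΨ_ne_bot _)
  by_cases hu_top : Ψ (x k) = ⊤
  · rw [hu_top, ← hst, EReal.top_add_coe, ← EReal.coe_add, EReal.top_sub_coe, EReal.top_add_coe]
    exact le_top
  have hu : ((Ψ (x k)).toReal : EReal) = Ψ (x k) := EReal.coe_toReal hu_top (hΨ_ne_bot _)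
  have hprox := aux_prox Ψ hΨ_convex (1 / (2 * s)) (x (k + 1)) (y k - s • Φ' (y k)) (x k) _ _
    hz.symm hu.symm (hx k hk)
  have hdesc := aux_descent Φ Φ' hΦ_diff L hL.le hΦ_lip (y k) (x (k + 1))
  have hconv := aux_convex Φ Φ' hΦ_diff hΦ_convex (y k) (x k)
  have hyk : ‖x k - y k‖ ^ 2
      = ((k : ℝ) - 1) ^ 2 / ((k : ℝ) + α - 1) ^ 2 * ‖x k - x (k - 1)‖ ^ 2 := by
    rw [hy k hk, sub_add_cancel_left, norm_neg, norm_smul, mul_pow, Real.norm_eq_abs, sq_abs,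
      div_pow]
  rw [Nat.sub_add_cancel hk]
  have e1 : x (k + 1) - (y k - s • Φ' (y k)) = (x (k + 1) - y k) + s • Φ' (y k) := by abel
  rw [e1, inner_add_right, inner_smul_right] at hprox
  have e2 : ‖x k - y k‖ ^ 2 = ‖x (k + 1) - x k‖ ^ 2
      + 2 * inner ℝ (x k - x (k + 1)) (x (k + 1) - y k) + ‖x (k + 1) - y k‖ ^ 2 := by
    rw [norm_sub_rev (x (k + 1)) (x k), ← norm_add_sq_real]
    congr 2
    abel
  have e3 : inner ℝ (x k - x (k + 1)) (Φ' (y k))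
      = inner ℝ (Φ' (y k)) (x k - y k) - inner ℝ (Φ' (y k)) (x (k + 1) - y k) := by
    rw [← inner_sub_right, real_inner_comm]
    congr 1
    abel
  rw [e3] at hprox
  have hl := mul_le_mul_of_nonneg_right hLs (sq_nonneg ‖x (k + 1) - y k‖)
  have e4 : 2 * (1 / (2 * s)) * (inner ℝ (x k - x (k + 1)) (x (k + 1) - y k)
      + s * (inner ℝ (Φ' (y k)) (x k - y k) - inner ℝ (Φ' (y k)) (x (k + 1) - y k)))
      = 1 / s * inner ℝ (x k - x (k + 1)) (x (k + 1) - y k)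
      + (inner ℝ (Φ' (y k)) (x k - y k) - inner ℝ (Φ' (y k)) (x (k + 1) - y k)) := by
    field_simp
  rw [e4] at hprox
  have e5 : 1 / (2 * s) = 1 / s / 2 := by field_simp
  have e6 : ((k : ℝ) - 1) ^ 2 / ((k : ℝ) + α - 1) ^ 2 * (1 / (2 * s) * ‖x k - x (k - 1)‖ ^ 2)
      = 1 / s / 2 * ‖x k - y k‖ ^ 2 := by
    rw [hyk, e5]; ring
  rw [← hz, ← hst, ← hu, e6, e2, e5]
  norm_cast
  linarith
end

section
/- Let H be a real Hilbert space, Ψ : H → ℝ ∪ {+∞} proper, lower-semicontinuous and convex, and Φ : H → ℝ convex and continuously differentiable with L-Lipschitz continuous gradient. Suppose x* ∈ argmin(Ψ + Φ), and let (x_k) be generated by the accelerated forward-backward algorithm with parameter α > 3 and step size 0 < s < 1/L. Then the limit lim_{k→∞} [ k² ‖x_{k+1} − x_k‖² + (k+1)² (Θ(x_{k+1}) − Θ(x*)) ] exists. -/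
open Filter RealInnerProductSpace

lemma seq_aux (a : ℝ) (ha : 2 < a) (w D E : ℕ → ℝ) (hw : ∀ k, 0 ≤ w k) (hD : ∀ k, 0 ≤ D k)
    (hE : ∀ k, 0 ≤ E k)
    (h1 : ∀ k : ℕ, E (k+1) + ((k+2) * (a-2) + (a-1)^2) * w k ≤ E k)
    (h2 : ∀ k : ℕ, ((k:ℝ)+2+a)^2 * (w (k+1) + D (k+1)) ≤ ((k:ℝ)+2+a)^2 * w k + ((k:ℝ)+1)^2 * D k) :
    Tendsto (fun k : ℕ => ((k:ℝ)+1)^2 * D k + ((k:ℝ)+1+a)^2 * w k) atTop (nhds 0) := by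
  set F : ℕ → ℝ := fun k : ℕ => ((k:ℝ)+1)^2 * D k + ((k:ℝ)+1+a)^2 * w k with hFdef
  have hF0 : ∀ k, 0 ≤ F k := fun k => by
    have := hw k; have := hD k; simp only [hFdef]; positivity
  -- C such that C*(a-2) ≥ 4, C*(a-1)^2 ≥ 2a
  obtain ⟨C, hC0, hC1, hC2⟩ : ∃ C : ℝ, 0 ≤ C ∧ 3 ≤ C * (a-2) ∧ 2*a ≤ C * (a-1)^2 := by
    have h : 0 < a - 2 := by linarith
    have h' : 0 < (a-1)^2 := by nlinarith
    refine ⟨3/(a-2) + 2*a/(a-1)^2, by positivity, ?_, ?_⟩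
    · rw [add_mul, div_mul_cancel₀ _ h.ne']
      have : 0 ≤ 2*a/(a-1)^2 * (a-2) := by positivity
      linarith
    · rw [add_mul, div_mul_cancel₀ _ h'.ne']
      have : 0 ≤ 3/(a-2) * (a-1)^2 := by positivity
      linarith
  set G : ℕ → ℝ := fun k => F k + C * E k with hG
  have hstep : ∀ k : ℕ, G (k+1) + ((k:ℝ)+1) * (w k + D (k+1)) ≤ G k := by
    intro k
    have e1 := mul_le_mul_of_nonneg_left (h1 k) hC0
    have e2 := h2 k
    have hk : (0:ℝ) ≤ k := Nat.cast_nonneg k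
    have e3 : (3*((k:ℝ)+2) + 2*a) * w k ≤ C * (((k+2) * (a-2) + (a-1)^2) * w k) := by
      rw [← mul_assoc]
      apply mul_le_mul_of_nonneg_right _ (hw k)
      nlinarith
    have e4 : 0 ≤ (2*((k:ℝ)+2)*a + a^2 - ((k:ℝ)+1)) * D (k+1) := by
      apply mul_nonneg _ (hD _)
      nlinarith
    have e5 := hw k
    simp only [hG, hFdef]
    push_cast
    nlinarith
  have hG0 : ∀ k, 0 ≤ G k := fun k => add_nonneg (hF0 k) (mul_nonneg hC0 (hE k))
  have hGanti : Antitone G := antitone_nat_of_succ_le fun k => by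
    have : 0 ≤ ((k:ℝ)+1) * (w k + D (k+1)) := by have := hw k; have := hD (k+1); positivity
    linarith [hstep k]
  have hEanti : Antitone E := antitone_nat_of_succ_le fun k => by
    have : 0 ≤ (((k:ℝ)+2) * (a-2) + (a-1)^2) * w k := by
      have := hw k; have : 0 < a - 2 := by linarith
      positivity
    linarith [h1 k]
  have tG := tendsto_atTop_ciInf hGanti ⟨0, by rintro _ ⟨k, rfl⟩; exact hG0 k⟩
  have tE := tendsto_atTop_ciInf hEanti ⟨0, by rintro _ ⟨k, rfl⟩; exact hE k⟩
  have tF : Tendsto F atTop (nhds ((⨅ i, G i) - C * ⨅ i, E i)) := by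
    have := tG.sub (tE.const_mul C)
    refine this.congr fun k => ?_
    simp [hG]
  set l := (⨅ i, G i) - C * ⨅ i, E i with hl
  have hl0 : 0 ≤ l := ge_of_tendsto' tF hF0
  have hsum : Summable (fun k : ℕ => ((k:ℝ)+1) * (w k + D (k+1))) := by
    apply summable_of_sum_range_le (c := G 0)
    · intro k; have := hw k; have := hD (k+1); positivity
    · intro n
      have : ∑ i ∈ Finset.range n, ((i:ℝ)+1) * (w i + D (i+1)) + G n ≤ G 0 := by
        induction n with
        | zero => simp
        | succ n ih => rw [Finset.sum_range_succ]; linarith [hstep n]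
      linarith [hG0 n]
  rcases hl0.eq_or_lt with h | h
  · rw [← h] at tF; exact tF
  exfalso
  have ev : ∀ᶠ k in atTop, l/2 < F k := tF.eventually (lt_mem_nhds (by linarith))
  obtain ⟨N, hN⟩ := eventually_atTop.1 ev
  -- w(k+1) term
  have hsum2 : Summable (fun k : ℕ => ((k:ℝ)+1) * (w k + D (k+1)) + (((k+1:ℕ):ℝ)+1) * (w (k+1) + D (k+1+1))) :=
    hsum.add ((summable_nat_add_iff 1).2 hsum)
  have hsum3 : Summable (fun k : ℕ => (1:ℝ) / ((k + (N+1) : ℕ):ℝ)) := by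
    have := (summable_nat_add_iff N).2 (hsum2.mul_left (2/l * (3+a)^2))
    refine Summable.of_nonneg_of_le (fun k => by positivity) (fun k => ?_) this
    have hk := hN (k+N+1) (by omega)
    simp only [hFdef] at hk
    generalize hm : k + N = m at *
    have hm' : k + (N+1) = m+1 := by omega
    rw [hm']
    push_cast at *
    have hp : (0:ℝ) < (m:ℝ)+1 := by positivity
    rw [div_le_iff₀ hp]
    have w1 := hw m; have w2 := hw (m+1); have D1 := hD (m+1); have D2 := hD (m+2)
    have hm0 : (0:ℝ) ≤ m := Nat.cast_nonneg m
    have b1 : ((m:ℝ)+1+1)^2 * D (m+1) ≤ ((3+a)^2 * ((m:ℝ)+1)^2) * D (m+1) := by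
      apply mul_le_mul_of_nonneg_right _ D1
      rw [← mul_pow]
      exact pow_le_pow_left₀ (by positivity) (by nlinarith) 2
    have b2 : ((m:ℝ)+1+1+a)^2 * w (m+1) ≤ ((3+a)^2 * ((m:ℝ)+1)^2) * w (m+1) := by
      apply mul_le_mul_of_nonneg_right _ w2
      rw [← mul_pow]
      exact pow_le_pow_left₀ (by positivity) (by nlinarith) 2
    have b3 : l/2 ≤ (3+a)^2 * (((m:ℝ)+1) * (w m + D (m+1)) + ((m:ℝ)+1+1) * (w (m+1) + D (m+1+1))) * ((m:ℝ)+1) := by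
      have : (((m:ℝ)+1)^2) * (D (m+1) + w (m+1)) ≤ (((m:ℝ)+1) * (w m + D (m+1)) + ((m:ℝ)+1+1) * (w (m+1) + D (m+1+1))) * ((m:ℝ)+1) := by
        have q1 : 0 ≤ ((m:ℝ)+1)^2 * w m := by positivity
        have q2 : 0 ≤ ((m:ℝ)+1) * w (m+1) := by positivity
        have q3 : 0 ≤ ((m:ℝ)+1+1) * ((m:ℝ)+1) * D (m+1+1) := by positivity
        nlinarith
      have := mul_le_mul_of_nonneg_left this (sq_nonneg (3+a))
      nlinarith
    have := mul_le_mul_of_nonneg_left b3 (show 0 ≤ 2/l by positivity)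
    rw [show 2/l*(l/2) = 1 by field_simp] at this
    linarith
  exact Real.not_summable_one_div_natCast ((summable_nat_add_iff (N+1)).1 hsum3)

lemma line_deriv_aux {H : Type*} [NormedAddCommGroup H] [InnerProductSpace ℝ H] [CompleteSpace H]
    (Φ : H → ℝ) (Φ' : H → H) (hΦ_diff : ∀ u, HasGradientAt Φ (Φ' u) u) (y h : H) (t : ℝ) :
    HasDerivAt (fun t : ℝ => Φ (y + t • h)) (inner ℝ (Φ' (y + t • h)) h) t := by
  have h1 := (hΦ_diff (y + t • h)).hasFDerivAt
  have h2 : HasDerivAt (fun t : ℝ => y + t • h) h t := by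
    simpa using ((hasDerivAt_id t).smul_const h).const_add y
  have h3 := h1.comp_hasDerivAt t h2
  simp only [InnerProductSpace.toDual_apply_apply] at h3
  exact h3

lemma descent_aux {H : Type*} [NormedAddCommGroup H] [InnerProductSpace ℝ H] [CompleteSpace H]
    (Φ : H → ℝ) (Φ' : H → H) (L : ℝ) (hL : 0 ≤ L) (hΦ_diff : ∀ u, HasGradientAt Φ (Φ' u) u)
    (hΦ_lip : LipschitzWith (Real.toNNReal L) Φ') (y h : H) :
    Φ (y + h) ≤ Φ y + inner ℝ (Φ' y) h + L / 2 * ‖h‖^2 := by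
  have hd : ∀ t : ℝ, HasDerivAt (fun t : ℝ => Φ (y + t • h) - t * inner ℝ (Φ' y) h - t^2 * (L/2*‖h‖^2))
      (inner ℝ (Φ' (y + t • h)) h - inner ℝ (Φ' y) h - 2 * t * (L/2*‖h‖^2)) t := by
    intro t
    have h1 := line_deriv_aux Φ Φ' hΦ_diff y h t
    have h2 := (hasDerivAt_id t).mul_const (inner ℝ (Φ' y) h)
    have h3 := (hasDerivAt_pow 2 t).mul_const (L/2*‖h‖^2)
    refine ((h1.sub h2).sub h3).congr_deriv ?_
    simp
  have anti : AntitoneOn (fun t : ℝ => Φ (y + t • h) - t * inner ℝ (Φ' y) h - t^2 * (L/2*‖h‖^2)) (Set.Icc 0 1) := by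
    apply antitoneOn_of_deriv_nonpos (convex_Icc 0 1)
    · exact fun t _ => (hd t).continuousAt.continuousWithinAt
    · exact fun t _ => (hd t).differentiableAt.differentiableWithinAt
    · intro t ht
      rw [interior_Icc] at ht
      rw [(hd t).deriv, ← inner_sub_left]
      have h1 := real_inner_le_norm (Φ' (y + t • h) - Φ' y) h
      have h2 := hΦ_lip.dist_le_mul (y + t • h) y
      rw [dist_eq_norm, dist_eq_norm, Real.coe_toNNReal _ hL, add_sub_cancel_left, norm_smul,
        Real.norm_of_nonneg ht.1.le] at h2
      have h3 := mul_le_mul_of_nonneg_right h2 (norm_nonneg h)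
      nlinarith
  have := anti (Set.left_mem_Icc.2 zero_le_one) (Set.right_mem_Icc.2 zero_le_one) zero_le_one
  simp at this
  linarith

lemma convex_aux {H : Type*} [NormedAddCommGroup H] [InnerProductSpace ℝ H] [CompleteSpace H]
    (Φ : H → ℝ) (Φ' : H → H) (hΦ_diff : ∀ u, HasGradientAt Φ (Φ' u) u)
    (hc : ConvexOn ℝ Set.univ Φ) (y h : H) :
    Φ y + inner ℝ (Φ' y) h ≤ Φ (y + h) := by
  have h1 := line_deriv_aux Φ Φ' hΦ_diff y h 0
  have hc' : ConvexOn ℝ Set.univ (fun t : ℝ => Φ (y + t • h)) := by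
    refine ⟨convex_univ, fun p _ q _ c d hc0 hd0 hcd => ?_⟩
    have := hc.2 (Set.mem_univ (y + p • h)) (Set.mem_univ (y + q • h)) hc0 hd0 hcd
    convert this using 2
    have : d = 1 - c := by linarith
    subst this
    simp only [smul_eq_mul]
    module
  have := hc'.le_slope_of_hasDerivAt (Set.mem_univ 0) (Set.mem_univ 1) zero_lt_one h1
  simp [slope_def_field] at this
  linarith

/-- prox three-point inequality -/
lemma prox_aux {H : Type*} [NormedAddCommGroup H] [InnerProductSpace ℝ H]
    (Ψ : H → EReal) (s : ℝ) (hs : 0 < s)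
    (hΨ_convex : ∀ u v : H, ∀ a b : ℝ, 0 ≤ a → 0 ≤ b → a + b = 1 →
      Ψ (a • u + b • v) ≤ (a : EReal) * Ψ u + (b : EReal) * Ψ v)
    (p z u : H) (A B : ℝ) (hA : Ψ z = A) (hB : Ψ u = B)
    (hz : ∀ u : H, Ψ z + ((1 / (2 * s) * ‖z - p‖ ^ 2 : ℝ) : EReal)
        ≤ Ψ u + ((1 / (2 * s) * ‖u - p‖ ^ 2 : ℝ) : EReal)) :
    2 * s * A ≤ 2 * s * B + 2 * inner ℝ (z - p) (u - z) := by
  have key : ∀ t : ℝ, 0 < t → t < 1 →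
      2 * s * A ≤ 2 * s * B + 2 * inner ℝ (z - p) (u - z) + t * ‖u - z‖^2 := by
    intro t h0 h1
    have h2 := hΨ_convex z u (1-t) t (by linarith) h0.le (by ring)
    have h3 := (hz ((1-t) • z + t • u)).trans (add_le_add_left h2 _)
    rw [hA, hB] at h3
    have h4 : A + (1 / (2 * s) * ‖z - p‖ ^ 2) ≤ ((1-t) * A + t * B) + 1 / (2 * s) * ‖(1-t) • z + t • u - p‖ ^ 2 := by
      exact_mod_cast h3
    rw [show (1-t) • z + t • u - p = (z - p) + t • (u - z) by module, norm_add_sq_real,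
      inner_smul_right, norm_smul, Real.norm_of_nonneg h0.le] at h4
    have h5 := mul_le_mul_of_nonneg_left h4 (show 0 ≤ 2 * s by linarith)
    have e : ∀ q : ℝ, 2 * s * (1/(2*s) * q) = q := fun q => by field_simp
    rw [mul_add, mul_add, e, e] at h5
    have : 0 ≤ t * (2 * s * B + 2 * inner ℝ (z - p) (u - z) + t * ‖u - z‖^2 - 2 * s * A) := by
      nlinarith
    linarith [nonneg_of_mul_nonneg_right this h0]
  have lim : Tendsto (fun t : ℝ => 2 * s * B + 2 * inner ℝ (z - p) (u - z) + t * ‖u - z‖^2) (nhdsWithin 0 (Set.Ioi 0))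
      (nhds (2 * s * B + 2 * inner ℝ (z - p) (u - z) + 0 * ‖u - z‖^2)) := by
    apply Tendsto.mono_left _ nhdsWithin_le_nhds
    apply Continuous.tendsto
    fun_prop
  have := ge_of_tendsto lim (b := 2 * s * A) (by
    filter_upwards [Ioo_mem_nhdsGT (zero_lt_one' ℝ)] with t ht using key t ht.1 ht.2)
  linarith

lemma step_aux {H : Type*} [NormedAddCommGroup H] [InnerProductSpace ℝ H] [CompleteSpace H]
    (Ψ : H → EReal) (Φ : H → ℝ) (Φ' : H → H) (L s : ℝ)
    (hΨ_convex : ∀ u v : H, ∀ a b : ℝ, 0 ≤ a → 0 ≤ b → a + b = 1 →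
      Ψ (a • u + b • v) ≤ (a : EReal) * Ψ u + (b : EReal) * Ψ v)
    (hΦ_convex : ConvexOn ℝ Set.univ Φ)
    (hΦ_diff : ∀ u, HasGradientAt Φ (Φ' u) u)
    (hΦ_lip : LipschitzWith (Real.toNNReal L) Φ')
    (hs : 0 < s) (hL : 0 < L) (hsL : s * L ≤ 1) (y z u : H) (A B : ℝ) (hA : Ψ z = A) (hB : Ψ u = B)
    (hz : ∀ u : H, Ψ z + ((1 / (2 * s) * ‖z - (y - s • Φ' y)‖ ^ 2 : ℝ) : EReal)
        ≤ Ψ u + ((1 / (2 * s) * ‖u - (y - s • Φ' y)‖ ^ 2 : ℝ) : EReal)) :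
    2 * s * (A + Φ z) + ‖z - u‖^2 ≤ 2 * s * (B + Φ u) + ‖y - u‖^2 := by
  have h1 := prox_aux Ψ s hs hΨ_convex _ z u A B hA hB hz
  have h2 := descent_aux Φ Φ' L hL.le hΦ_diff hΦ_lip y (z - y)
  have h3 := convex_aux Φ Φ' hΦ_diff hΦ_convex y (u - y)
  rw [add_sub_cancel] at h2 h3
  rw [show z - (y - s • Φ' y) = (z - y) + s • Φ' y by abel, inner_add_left, inner_smul_left] at h1
  simp only [RCLike.conj_to_real] at h1
  have h4 : inner ℝ (Φ' y) (u - z) + inner ℝ (Φ' y) (z - y) = inner ℝ (Φ' y) (u - y) := by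
    rw [← inner_add_right]; congr 1; abel
  have h5 : ‖y - u‖^2 = ‖z - y‖^2 + 2 * inner ℝ (z - y) (u - z) + ‖z - u‖^2 := by
    rw [norm_sub_rev y u, norm_sub_rev z u, ← norm_add_sq_real]; congr 2; abel
  have h6 := mul_le_mul_of_nonneg_left h2 (show 0 ≤ 2 * s by linarith)
  have h7 := mul_le_mul_of_nonneg_left h3 (show 0 ≤ 2 * s by linarith)
  have h8 := mul_le_mul_of_nonneg_right hsL (sq_nonneg ‖z - y‖)
  rw [h5]
  have h9 : s * inner ℝ (Φ' y) (u - z) = s * inner ℝ (Φ' y) (u - y) - s * inner ℝ (Φ' y) (z - y) := by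
    rw [← h4]; ring
  nlinarith

lemma vec_aux {H : Type*} [NormedAddCommGroup H] [InnerProductSpace ℝ H]
    (e r f : H) (a k w w' : ℝ) (ha : 0 ≤ a) (hk : 0 ≤ k)
    (hA : w' + ‖e + r‖^2 ≤ ‖f + r‖^2) (hB : w' + ‖e‖^2 ≤ w + ‖f‖^2) :
    (k+a)^2 * w' + ‖a • r + (k+a) • e‖^2 + (k*(a-2)+(a-1)^2) * w
      ≤ (k+a-1)^2 * w + ‖a • r + (k+a) • f‖^2 := by
  have hK : 0 ≤ k + a := by positivity
  have h1 := mul_le_mul_of_nonneg_left hA (mul_nonneg ha hK)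
  have h2 := mul_le_mul_of_nonneg_left hB (mul_nonneg hk hK)
  simp only [norm_add_sq_real, inner_smul_left, inner_smul_right, norm_smul, mul_pow,
    Real.norm_eq_abs, sq_abs, RCLike.conj_to_real] at *
  rw [real_inner_comm r e, real_inner_comm r f] at h1
  nlinarith

/-- Lemma 1: `lim_k [k²‖x_{k+1}-x_k‖² + (k+1)²(Θ(x_{k+1})-Θ(x*))]` exists. -/
theorem fista_lemma_limit_exists
    {H : Type*} [NormedAddCommGroup H] [InnerProductSpace ℝ H] [CompleteSpace H]
    (Ψ : H → EReal) (Φ : H → ℝ) (Φ' : H → H) (L s α : ℝ)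
    (hΨ_ne_bot : ∀ u, Ψ u ≠ ⊥) (hΨ_proper : ∃ u, Ψ u ≠ ⊤)
    (hΨ_lsc : LowerSemicontinuous Ψ)
    (hΨ_convex : ∀ u v : H, ∀ a b : ℝ, 0 ≤ a → 0 ≤ b → a + b = 1 →
      Ψ (a • u + b • v) ≤ (a : EReal) * Ψ u + (b : EReal) * Ψ v)
    (hΦ_convex : ConvexOn ℝ Set.univ Φ)
    (hΦ_diff : ∀ u, HasGradientAt Φ (Φ' u) u)
    (hΦ_lip : LipschitzWith (Real.toNNReal L) Φ')
    (hα : 3 < α) (hs : 0 < s) (hsL : s < 1 / L)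
    (x y : ℕ → H)
    (hy : ∀ k : ℕ, 1 ≤ k →
      y k = x k + (((k : ℝ) - 1) / ((k : ℝ) + α - 1)) • (x k - x (k - 1)))
    (hx : ∀ k : ℕ, 1 ≤ k → ∀ u : H,
      Ψ (x (k + 1)) + ((1 / (2 * s) * ‖x (k + 1) - (y k - s • Φ' (y k))‖ ^ 2 : ℝ) : EReal)
        ≤ Ψ u + ((1 / (2 * s) * ‖u - (y k - s • Φ' (y k))‖ ^ 2 : ℝ) : EReal))
    (xstar : H)
    (hxstar : ∀ u, Ψ xstar + (Φ xstar : EReal) ≤ Ψ u + (Φ u : EReal)) :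
    ∃ l : EReal,
      Tendsto (fun k : ℕ => (((k : ℝ) ^ 2 * ‖x (k + 1) - x k‖ ^ 2 : ℝ) : EReal) +
          ((((k : ℝ) + 1) ^ 2 : ℝ) : EReal) * ((Ψ (x (k + 1)) + (Φ (x (k + 1)) : EReal)) - (Ψ xstar + (Φ xstar : EReal)))) atTop (nhds l) := by
  have hL : 0 < L := by
    by_contra h
    have : 1 / L ≤ 0 := one_div_nonpos.2 (not_lt.1 h)
    linarith
  have hsL1 : s * L ≤ 1 := ((lt_div_iff₀ hL).1 hsL).le
  have hst_top : Ψ xstar ≠ ⊤ := by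
    obtain ⟨u, hu⟩ := hΨ_proper
    intro h
    have := hxstar u
    rw [h, EReal.top_add_coe, top_le_iff] at this
    exact (EReal.add_ne_top hu (EReal.coe_ne_top _)) this
  have hx_top : ∀ n, Ψ (x (n+2)) ≠ ⊤ := by
    intro n h
    have := hx (n+1) (by omega) xstar
    rw [show n + 1 + 1 = n + 2 from rfl, h, EReal.top_add_coe, top_le_iff] at this
    exact (EReal.add_ne_top hst_top (EReal.coe_ne_top _)) this
  obtain ⟨B, hB⟩ : ∃ B : ℝ, Ψ xstar = B :=
    ⟨_, (EReal.coe_toReal hst_top (hΨ_ne_bot _)).symm⟩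
  have hψ : ∀ n, ∃ A : ℝ, Ψ (x (n+2)) = A := fun n =>
    ⟨_, (EReal.coe_toReal (hx_top n) (hΨ_ne_bot _)).symm⟩
  choose ψ hψ using hψ
  have hmin : ∀ n, B + Φ xstar ≤ ψ n + Φ (x (n+2)) := by
    intro n
    have := hxstar (x (n+2))
    rw [hB, hψ] at this
    exact_mod_cast this
  set a : ℝ := α - 1 with ha_def
  have ha : 2 < a := by linarith
  set w : ℕ → ℝ := fun n => 2 * s * ((ψ n + Φ (x (n+2))) - (B + Φ xstar)) with hw_def
  set D : ℕ → ℝ := fun n => ‖x (n+2) - x (n+1)‖^2 with hD_def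
  have hw0 : ∀ n, 0 ≤ w n := fun n => mul_nonneg (by linarith) (sub_nonneg.2 (hmin n))
  have hD0 : ∀ n, 0 ≤ D n := fun n => sq_nonneg _
  have hyn : ∀ n : ℕ, y (n+2) = x (n+2) + (((n:ℝ)+1)/((n:ℝ)+2+a)) • (x (n+2) - x (n+1)) := by
    intro n
    have := hy (n+2) (by omega)
    rw [this, show n + 2 - 1 = n + 1 by omega]
    push_cast
    congr 3
    · ring
    · rw [ha_def]; ring
  have hA1 : ∀ n : ℕ, w (n+1) + ‖(x (n+3) - x (n+2)) + (x (n+2) - xstar)‖^2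
      ≤ ‖(((n:ℝ)+1)/((n:ℝ)+2+a)) • (x (n+2) - x (n+1)) + (x (n+2) - xstar)‖^2 := by
    intro n
    have := step_aux Ψ Φ Φ' L s hΨ_convex hΦ_convex hΦ_diff hΦ_lip hs hL hsL1 (y (n+2)) (x (n+3))
      xstar (ψ (n+1)) B (hψ (n+1)) hB (hx (n+2) (by omega))
    rw [show (x (n+3) - x (n+2)) + (x (n+2) - xstar) = x (n+3) - xstar by abel,
      ← add_sub_assoc, add_comm _ (x (n+2)), ← hyn n]
    simp only [hw_def]
    rw [show n + 1 + 2 = n + 3 from rfl]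
    linarith
  have hB1 : ∀ n : ℕ, w (n+1) + ‖x (n+3) - x (n+2)‖^2
      ≤ w n + ‖(((n:ℝ)+1)/((n:ℝ)+2+a)) • (x (n+2) - x (n+1))‖^2 := by
    intro n
    have := step_aux Ψ Φ Φ' L s hΨ_convex hΦ_convex hΦ_diff hΦ_lip hs hL hsL1 (y (n+2)) (x (n+3))
      (x (n+2)) (ψ (n+1)) (ψ n) (hψ (n+1)) (hψ n) (hx (n+2) (by omega))
    rw [hyn n, add_sub_cancel_left] at this
    simp only [hw_def]
    rw [show n + 1 + 2 = n + 3 from rfl]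
    linarith
  have hlim := seq_aux a ha w D
    (fun n => ((n:ℝ)+1+a)^2 * w n + ‖a • (x (n+2) - xstar) + ((n:ℝ)+1) • (x (n+2) - x (n+1))‖^2)
    hw0 hD0 (fun n => add_nonneg (mul_nonneg (sq_nonneg _) (hw0 n)) (sq_nonneg _))
    (by
      intro n
      have hK : ((n:ℝ)+2+a) ≠ 0 := by positivity
      have h := vec_aux (x (n+3) - x (n+2)) (x (n+2) - xstar) _ a ((n:ℝ)+2) (w n) (w (n+1))
        (by linarith) (by positivity) (hA1 n) (hB1 n)
      rw [smul_smul, mul_div_cancel₀ _ hK] at h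
      push_cast
      rw [show n + 1 + 2 = n + 3 from rfl, show n + 1 + 1 = n + 2 from rfl,
        show a • (x (n+3) - xstar) + ((n:ℝ)+1+1) • (x (n+3) - x (n+2)) =
          a • (x (n+2) - xstar) + ((n:ℝ)+2+a) • (x (n+3) - x (n+2)) by module,
        show (n:ℝ)+1+1+a = n+2+a by ring, show (n:ℝ)+1+a = n+2+a-1 by ring]
      exact h)
    (by
      intro n
      have hK : ((n:ℝ)+2+a) ≠ 0 := by positivity
      have h := mul_le_mul_of_nonneg_left (hB1 n) (sq_nonneg ((n:ℝ)+2+a))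
      rw [norm_smul, mul_pow, Real.norm_eq_abs, sq_abs, div_pow, mul_add _ (w n), ← mul_assoc (((n:ℝ)+2+a)^2) (((n:ℝ)+1)^2 / ((n:ℝ)+2+a)^2),
        mul_div_cancel₀ _ (pow_ne_zero 2 hK)] at h
      exact h)
  refine ⟨0, ?_⟩
  rw [← tendsto_add_atTop_iff_nat 1]
  have hreal : Tendsto (fun n : ℕ => ((n:ℝ)+1)^2 * ‖x (n+2) - x (n+1)‖^2 +
      ((n:ℝ)+1+1)^2 * ((ψ n + Φ (x (n+2))) - (B + Φ xstar))) atTop (nhds 0) := by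
    have hlim2 := hlim.const_mul (1 + 1/(2*s))
    rw [mul_zero] at hlim2
    refine squeeze_zero (fun n => ?_) (fun n => ?_) hlim2
    · have := sub_nonneg.2 (hmin n)
      positivity
    · have e1 : (ψ n + Φ (x (n+2))) - (B + Φ xstar) = 1/(2*s) * w n := by
        simp only [hw_def]; field_simp
      rw [e1]
      have e2 : ((n:ℝ)+1+1)^2 * w n ≤ ((n:ℝ)+1+a)^2 * w n := by
        apply mul_le_mul_of_nonneg_right _ (hw0 n)
        exact pow_le_pow_left₀ (by positivity) (by linarith) 2
      have hp : 0 ≤ 1/(2*s) := by positivity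
      have e3 := mul_le_mul_of_nonneg_left e2 hp
      have e4 : 0 ≤ 1/(2*s) * (((n:ℝ)+1)^2 * D n) := by have := hD0 n; positivity
      have e5 : 0 ≤ ((n:ℝ)+1+a)^2 * w n := by have := hw0 n; positivity
      change ((n:ℝ)+1)^2 * D n + _ ≤ _
      linarith
  have hE := (continuous_coe_real_ereal.tendsto 0).comp hreal
  refine hE.congr fun n => ?_
  simp only [Function.comp]
  rw [show n + 1 + 1 = n + 2 from rfl, hψ n, hB]
  push_cast
  rfl
end
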